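/- Let A, 𝓐 ∈ ℝ^{n×n} be symmetric matrices with nonnegative entries, let D and 𝓓 be diagonal matrices with positive diagonals, set L = D^{−1/2} A D^{−1/2} and 𝓛 = 𝓓^{−1/2} 𝓐 𝓓^{−1/2}, and suppose ‖D^{−1/2} A D^{−1/2}‖₂ ≤ 1. Then, writing ε = max_{1≤i≤n} |D_{ii}/𝓓_{ii} − 1|, one has ‖L − 𝓛‖₂ ≤ ε·(2 + ε) + ‖𝓓^{−1/2}(A − 𝓐)𝓓^{−1/2}‖₂. -/

import Mathlib

open Finset Matrix

/-- The spectral norm (largest singular value) of a real square matrix. -/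
noncomputable def specNorm {n : ℕ} (M : Matrix (Fin n) (Fin n) ℝ) : ℝ :=
  ‖LinearMap.toContinuousLinearMap (Matrix.toEuclideanLin M)‖

/-!
With `W = diag √(D i / 𝓓 i)` one has `𝓓^{-1/2} A 𝓓^{-1/2} = W L W`, so `L - 𝓛` splits as
`(L - W L W) + 𝓓^{-1/2} (A - 𝓐) 𝓓^{-1/2}`. Expanding
`W L W - L = (W - 1) L (W - 1) + (W - 1) L + L (W - 1)` bounds the first summand by
`‖L‖ (δ ^ 2 + 2 δ)` with `δ = ‖W - 1‖`, and `δ ≤ ε` because `|√x - 1| ≤ |x - 1|` for `x ≥ 0`.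
-/

theorem abs_sqrt_sub_one_le {x : ℝ} (hx : 0 ≤ x) : |√x - 1| ≤ |x - 1| :=
  calc |√x - 1| ≤ |√x - 1| * |√x + 1| :=
        le_mul_of_one_le_right (abs_nonneg _) <|
          (le_add_of_nonneg_left (Real.sqrt_nonneg x)).trans (le_abs_self _)
    _ = |√x ^ 2 - 1| := by rw [← abs_mul]; ring_nf
    _ = |x - 1| := by rw [Real.sq_sqrt hx]

theorem norm_mul_mul_sub_self_le {R : Type*} [SeminormedRing R] {w : R} {ε : ℝ}
    (hw : ‖w - 1‖ ≤ ε) (x : R) : ‖w * x * w - x‖ ≤ ‖x‖ * (ε * (2 + ε)) := by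
  have hleft : ‖(w - 1) * x‖ ≤ ε * ‖x‖ := norm_mul_le_of_le hw le_rfl
  have hright : ‖x * (w - 1)‖ ≤ ‖x‖ * ε := norm_mul_le_of_le le_rfl hw
  have hboth : ‖(w - 1) * x * (w - 1)‖ ≤ ε * ‖x‖ * ε := norm_mul_le_of_le hleft hw
  calc ‖w * x * w - x‖ = ‖(w - 1) * x * (w - 1) + (w - 1) * x + x * (w - 1)‖ := by
        congr 1; noncomm_ring
    _ ≤ ε * ‖x‖ * ε + ε * ‖x‖ + ‖x‖ * ε :=
        norm_add_le_of_le (norm_add_le_of_le hboth hleft) hright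
    _ = ‖x‖ * (ε * (2 + ε)) := by ring

section NormalizedMatrix

variable {ι 𝕜 : Type*} [Fintype ι] [DecidableEq ι] [RCLike 𝕜]

/-- The normalization `D^{-1/2} A D^{-1/2}` of a square matrix `A`, such as the normalized adjacency
matrix of a graph with degrees `D`. The diagonal matrix `D` is encoded by its real diagonal; where
`D i ≤ 0` the `i`-th row and column of the result vanish. -/
noncomputable def normalizedMatrix (D : ι → ℝ) (A : Matrix ι ι 𝕜) : Matrix ι ι 𝕜 :=
  diagonal (fun i => (((√(D i))⁻¹ : ℝ) : 𝕜)) * A * diagonal (fun i => (((√(D i))⁻¹ : ℝ) : 𝕜))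

theorem normalizedMatrix_sub (D : ι → ℝ) (A B : Matrix ι ι 𝕜) :
    normalizedMatrix D (A - B) = normalizedMatrix D A - normalizedMatrix D B := by
  simp only [normalizedMatrix, Matrix.mul_sub, Matrix.sub_mul]

theorem normalizedMatrix_eq_diagonal_mul_mul_diagonal {D : ι → ℝ} (hD : ∀ i, 0 < D i)
    (E : ι → ℝ) (A : Matrix ι ι 𝕜) :
    normalizedMatrix E A = diagonal (fun i => (√(D i / E i) : 𝕜)) * normalizedMatrix D A *
      diagonal (fun i => (√(D i / E i) : 𝕜)) := by
  have hscale (i : ι) : √(D i / E i) * (√(D i))⁻¹ = (√(E i))⁻¹ := by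
    rw [Real.sqrt_div (hD i).le, div_mul_eq_mul_div, mul_inv_cancel₀ (Real.sqrt_pos.2 (hD i)).ne',
      one_div]
  ext i j
  simp only [normalizedMatrix, diagonal_mul, mul_diagonal, ← hscale, RCLike.ofReal_mul]
  ring

open scoped Matrix.Norms.L2Operator

theorem norm_diagonal_sqrt_sub_one_le {x : ι → ℝ} (hx : 0 ≤ x) :
    ‖diagonal (fun i => (√(x i) : 𝕜)) - 1‖ ≤ ‖x - 1‖ := by
  rw [← diagonal_one, diagonal_sub, l2_opNorm_diagonal,
    pi_norm_le_iff_of_nonneg (norm_nonneg _)]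
  intro i
  calc ‖(√(x i) : 𝕜) - 1‖ = |√(x i) - 1| := by
        rw [← RCLike.ofReal_one, ← RCLike.ofReal_sub, RCLike.norm_ofReal]
    _ ≤ |x i - 1| := abs_sqrt_sub_one_le (hx i)
    _ ≤ ‖x - 1‖ := norm_le_pi_norm (x - 1) i

theorem normalized_matrix_perturbation_general {D E : ι → ℝ} (hD : ∀ i, 0 < D i)
    (hE : ∀ i, 0 < E i) {ε : ℝ} (hε : ‖D / E - 1‖ ≤ ε) (A B : Matrix ι ι 𝕜) :
    ‖normalizedMatrix D A - normalizedMatrix E B‖ ≤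
      ‖normalizedMatrix D A‖ * (ε * (2 + ε)) + ‖normalizedMatrix E (A - B)‖ := by
  have hDE : 0 ≤ D / E := fun i => (div_pos (hD i) (hE i)).le
  have hrescale : ‖normalizedMatrix E A - normalizedMatrix D A‖ ≤
      ‖normalizedMatrix D A‖ * (ε * (2 + ε)) := by
    rw [normalizedMatrix_eq_diagonal_mul_mul_diagonal hD E A]
    exact norm_mul_mul_sub_self_le ((norm_diagonal_sqrt_sub_one_le hDE).trans hε) _
  calc ‖normalizedMatrix D A - normalizedMatrix E B‖
      ≤ ‖normalizedMatrix D A - normalizedMatrix E A‖ +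
          ‖normalizedMatrix E A - normalizedMatrix E B‖ := norm_sub_le_norm_sub_add_norm_sub _ _ _
    _ ≤ ‖normalizedMatrix D A‖ * (ε * (2 + ε)) + ‖normalizedMatrix E (A - B)‖ := by
        rw [norm_sub_rev, normalizedMatrix_sub]
        gcongr

end NormalizedMatrix

/-- A deterministic perturbation bound: for symmetric nonnegative
`A, 𝓐` and positive diagonal `D, 𝓓`, with `L = D^{-1/2} A D^{-1/2}`,
`𝓛 = 𝓓^{-1/2} 𝓐 𝓓^{-1/2}` and `‖L‖₂ ≤ 1`, one has
`‖L − 𝓛‖₂ ≤ ε(2 + ε) + ‖𝓓^{-1/2}(A − 𝓐)𝓓^{-1/2}‖₂` where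
`ε = max_i |D_{ii}/𝓓_{ii} − 1|`. -/
theorem normalized_matrix_perturbation
    {n : ℕ} (hn : 0 < n)
    (A Ac : Matrix (Fin n) (Fin n) ℝ)
    (hAsymm : A.IsSymm) (hAcsymm : Ac.IsSymm)
    (hAnn : ∀ i j, 0 ≤ A i j) (hAcnn : ∀ i j, 0 ≤ Ac i j)
    (D Dc : Fin n → ℝ) (hDpos : ∀ i, 0 < D i) (hDcpos : ∀ i, 0 < Dc i)
    (L Lc : Matrix (Fin n) (Fin n) ℝ)
    (hL : L = Matrix.diagonal (fun i => (Real.sqrt (D i))⁻¹) * A *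
      Matrix.diagonal (fun i => (Real.sqrt (D i))⁻¹))
    (hLc : Lc = Matrix.diagonal (fun i => (Real.sqrt (Dc i))⁻¹) * Ac *
      Matrix.diagonal (fun i => (Real.sqrt (Dc i))⁻¹))
    (hLnorm : specNorm L ≤ 1)
    (ε : ℝ)
    (hε : ε = Finset.univ.sup' ⟨⟨0, hn⟩, Finset.mem_univ _⟩
      (fun i => |D i / Dc i - 1|)) :
    specNorm (L - Lc) ≤ ε * (2 + ε) +
      specNorm (Matrix.diagonal (fun i => (Real.sqrt (Dc i))⁻¹) * (A - Ac) *
        Matrix.diagonal (fun i => (Real.sqrt (Dc i))⁻¹)) := by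
  have : Nonempty (Fin n) := ⟨⟨0, hn⟩⟩
  have hεD : ‖D / Dc - 1‖ ≤ ε := (pi_norm_le_iff_of_nonempty _).2 fun i =>
    hε ▸ le_sup' (fun i => |D i / Dc i - 1|) (mem_univ i)
  have hε₀ : 0 ≤ ε := (norm_nonneg _).trans hεD
  subst hL hLc
  exact (normalized_matrix_perturbation_general hDpos hDcpos hεD A Ac).trans <|
    add_le_add_left (mul_le_of_le_one_left (by positivity) hLnorm) _
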